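/- arXiv:1410.4315 — 2 statements merged into one kernel-verified Lean document; each statement's English description precedes it below -/
import Mathlib

section
/- Let p ∈ (1,∞). For every constant c ≥ 0 there exists a constant C_{p,c} > 0 such that for all n ∈ ℕ and all shifts σ ∈ {0,1}^n with |2a_n − n| ≤ c√n (where a_n = #{j : σ_j = 0}), the L_p-discrepancy of the two-dimensional digit shifted Hammersley point set with N = 2^n points satisfies L_{p,N}(R_{n,σ}) ≤ C_{p,c} · √(log N)/N. -/
open MeasureTheory

/-- The real value of a binary digit. -/
noncomputable def bval (b : Bool) : ℝ := if b then 1 else 0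

/-- The two-dimensional digit shifted Hammersley point set with `2^n` points,
indexed by the digit vectors `t : Fin n → Bool`.  The index `i : Fin n`
corresponds to the digit `t_{i+1}` of the paper. -/
noncomputable def hammersleyShifted (n : ℕ) (σ : Fin n → Bool) (t : Fin n → Bool) : ℝ × ℝ :=
  (∑ i : Fin n, bval (t i) / 2 ^ (n - i.val),
   ∑ i : Fin n, bval (t i != σ i) / 2 ^ (i.val + 1))

/-- Number of points of the (indexed) point set `P` lying in `[0,t₁) × [0,t₂)`. -/
noncomputable def countIn {ι : Type*} [Fintype ι] (P : ι → ℝ × ℝ) (t : ℝ × ℝ) : ℕ :=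
  (Finset.univ.filter
    (fun k => 0 ≤ (P k).1 ∧ (P k).1 < t.1 ∧ 0 ≤ (P k).2 ∧ (P k).2 < t.2)).card

/-- The local discrepancy `D_N(P,t) = A_N([0,t),P)/N - t₁t₂` of an indexed point set. -/
noncomputable def localDisc {ι : Type*} [Fintype ι] (P : ι → ℝ × ℝ) (t : ℝ × ℝ) : ℝ :=
  (countIn P t : ℝ) / (Fintype.card ι) - t.1 * t.2

/-- The `L_p`-discrepancy of an indexed point set. -/
noncomputable def LpDisc (p : ℝ) {ι : Type*} [Fintype ι] (P : ι → ℝ × ℝ) : ℝ :=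
  (∫ t in Set.Icc (0 : ℝ × ℝ) 1, |localDisc P t| ^ p) ^ (1 / p)

/-- One-dimensional `L∞`-normalized Haar function `h_{j,m}`, with `j ∈ ℤ`, `j = -1`
giving the indicator of `[0,1)` and `j ≥ 0` the usual Haar function on `I_{j,m}`. -/
noncomputable def haar1 (j : ℤ) (m : ℕ) (x : ℝ) : ℝ :=
  if j = -1 then (if 0 ≤ x ∧ x < 1 then 1 else 0)
  else if (2 * m : ℝ) / 2 ^ (j.toNat + 1) ≤ x ∧ x < (2 * m + 1 : ℝ) / 2 ^ (j.toNat + 1) then 1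
  else if (2 * m + 1 : ℝ) / 2 ^ (j.toNat + 1) ≤ x ∧ x < (2 * m + 2 : ℝ) / 2 ^ (j.toNat + 1) then -1
  else 0

/-- Two-dimensional (tensor product) Haar function. -/
noncomputable def haar2 (j : ℤ × ℤ) (m : ℕ × ℕ) (x : ℝ × ℝ) : ℝ :=
  haar1 j.1 m.1 x.1 * haar1 j.2 m.2 x.2

/-- One-dimensional dyadic interval `I_{j,m}` (with `I_{-1,0} = [0,1)`). -/
noncomputable def dyadicI (j : ℤ) (m : ℕ) : Set ℝ :=
  if j = -1 then Set.Ico (0 : ℝ) 1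
  else Set.Ico ((m : ℝ) / 2 ^ j.toNat) ((m + 1 : ℝ) / 2 ^ j.toNat)

/-- Haar coefficient `μ_{j,m} = ∫_{[0,1]²} D_N(P,t) h_{j,m}(t) dt` of the local
discrepancy of an indexed point set. -/
noncomputable def haarCoeff {ι : Type*} [Fintype ι] (P : ι → ℝ × ℝ) (j : ℤ × ℤ) (m : ℕ × ℕ) : ℝ :=
  ∫ t in Set.Icc (0 : ℝ × ℝ) 1, localDisc P t * haar2 j m t

/-- Number of zero components of the shift `σ`. -/
noncomputable def zeroCount {n : ℕ} (σ : Fin n → Bool) : ℕ :=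
  (Finset.univ.filter (fun j => σ j = false)).card

/-- The symmetrized digit shifted Hammersley point set `R_{n,σ} ∪ R_{n,σ⊕1}`
with `2^(n+1)` points, indexed by `Bool × (Fin n → Bool)`. -/
noncomputable def hammersleySym (n : ℕ) (σ : Fin n → Bool) :
    Bool × (Fin n → Bool) → ℝ × ℝ :=
  fun bt => if bt.1 then hammersleyShifted n (fun i => !(σ i)) bt.2
            else hammersleyShifted n σ bt.2

/-- The multiset `R_{n,σ} ∪ {(x, 1-y) : (x,y) ∈ R_{n,σ}}` with `2^(n+1)` points
(counted with multiplicity), indexed by `Bool × (Fin n → Bool)`. -/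
noncomputable def hammersleySymTilde (n : ℕ) (σ : Fin n → Bool) :
    Bool × (Fin n → Bool) → ℝ × ℝ :=
  fun bt => if bt.1 then ((hammersleyShifted n σ bt.2).1, 1 - (hammersleyShifted n σ bt.2).2)
            else hammersleyShifted n σ bt.2

/-!
The last digit of `t` is the most significant digit of the first coordinate and the least
significant digit of the second one. Hence, when a last digit is appended to `σ` and to the digits
`a`, `b` of a grid point, the scaled local discrepancy at the grid point changes by a quantity that
depends only on the new digits, on the first coordinate of the old grid point and on whether one
particular old point lies to the left of it. For random digits `a`, `b` this is, up to a bounded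
correction and the deterministic drift `(2aₙ - n) / 8`, a martingale with increments bounded by `1`.
The Azuma-Hoeffding bound on its exponential moments yields an `L_p` norm of order `√n` for every
`p`, and passing from grid points to arbitrary points costs only a bounded error.
-/

namespace Hammersley

open Finset
open scoped symmDiff

variable {n : ℕ}

lemma sum_eq_sum_init_last {α M : Type*} [Fintype α] [AddCommMonoid M]
    (F : (Fin n → α) → α → M) :
    ∑ t : Fin (n + 1) → α, F (Fin.init t) (t (Fin.last n)) = ∑ t, ∑ x, F t x := by
  rw [← (Fin.snocEquiv fun _ ↦ α).sum_comp, Fintype.sum_prod_type_right]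
  simp [Fin.snocEquiv]

lemma ofBits_injective : Function.Injective (Nat.ofBits : (Fin n → Bool) → ℕ) := fun s t h ↦ by
  funext i
  simpa using congrArg (Nat.testBit · i) h

lemma exists_ofBits_eq {k : ℕ} (hk : k < 2 ^ n) : ∃ s : Fin n → Bool, Nat.ofBits s = k :=
  ⟨fun i ↦ k.testBit i, by rw [Nat.ofBits_testBit, Nat.mod_eq_of_lt hk]⟩

lemma ofBits_eq_sum (s : Fin n → Bool) : Nat.ofBits s = ∑ i, (s i).toNat * 2 ^ (i : ℕ) := by
  induction n with
  | zero => simp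
  | succ n ih =>
    rw [Nat.ofBits_succ, ih, Fin.sum_univ_succ, mul_sum, add_comm]
    simp [pow_succ, mul_comm, mul_left_comm]

lemma ofBits_init_last (s : Fin (n + 1) → Bool) :
    Nat.ofBits s = Nat.ofBits (Fin.init s) + 2 ^ n * (s (Fin.last n)).toNat := by
  simp [ofBits_eq_sum, Fin.sum_univ_castSucc, Fin.init, mul_comm]

lemma ofBits_lt_ofBits_iff {s t : Fin (n + 1) → Bool} :
    Nat.ofBits s < Nat.ofBits t ↔ s (Fin.last n) < t (Fin.last n) ∨
      s (Fin.last n) = t (Fin.last n) ∧ Nat.ofBits (Fin.init s) < Nat.ofBits (Fin.init t) := by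
  have hs := Nat.ofBits_lt_two_pow (Fin.init s)
  have ht := Nat.ofBits_lt_two_pow (Fin.init t)
  rw [ofBits_init_last s, ofBits_init_last t]
  cases s (Fin.last n) <;> cases t (Fin.last n) <;> simp [Bool.lt_iff] <;> omega

/-- The natural number whose binary digits, most significant first, are `s 0, …, s (n - 1)`;
`Nat.ofBits` reads the digits in the opposite order. -/
def ofBitsRev (s : Fin n → Bool) : ℕ := Nat.ofBits (s ∘ Fin.rev)

lemma ofBitsRev_lt_two_pow (s : Fin n → Bool) : ofBitsRev s < 2 ^ n := Nat.ofBits_lt_two_pow _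

lemma ofBitsRev_injective : Function.Injective (ofBitsRev : (Fin n → Bool) → ℕ) :=
  ofBits_injective.comp Fin.rev_surjective.injective_comp_right

lemma exists_ofBitsRev_eq {k : ℕ} (hk : k < 2 ^ n) : ∃ s : Fin n → Bool, ofBitsRev s = k := by
  obtain ⟨s, rfl⟩ := exists_ofBits_eq hk
  exact ⟨s ∘ Fin.rev, congrArg Nat.ofBits (by ext; simp)⟩

lemma ofBitsRev_init_last (s : Fin (n + 1) → Bool) :
    ofBitsRev s = 2 * ofBitsRev (Fin.init s) + (s (Fin.last n)).toNat := by
  rw [ofBitsRev, Nat.ofBits_succ]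
  congr 3
  ext i
  simp [Fin.init, Fin.rev_succ]

lemma ofBitsRev_lt_ofBitsRev_iff {s t : Fin (n + 1) → Bool} :
    ofBitsRev s < ofBitsRev t ↔ ofBitsRev (Fin.init s) < ofBitsRev (Fin.init t) ∨
      Fin.init s = Fin.init t ∧ s (Fin.last n) < t (Fin.last n) := by
  rw [← ofBitsRev_injective.eq_iff (a := Fin.init s), ofBitsRev_init_last s, ofBitsRev_init_last t]
  cases s (Fin.last n) <;> cases t (Fin.last n) <;> simp [Bool.lt_iff] <;> omega

lemma card_ofBitsRev_symmDiff_lt (σ b : Fin n → Bool) :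
    #{t | ofBitsRev (t ∆ σ) < ofBitsRev b} = ofBitsRev b := by
  have hinj : Function.Injective fun t ↦ ofBitsRev (t ∆ σ) :=
    ofBitsRev_injective.comp (symmDiff_left_injective σ)
  suffices image (fun t ↦ ofBitsRev (t ∆ σ)) {t | ofBitsRev (t ∆ σ) < ofBitsRev b} =
      range (ofBitsRev b) by
    rw [← card_image_of_injective _ hinj, this, card_range]
  ext k
  simp only [mem_image, mem_filter, mem_univ, true_and, mem_range]
  refine ⟨by rintro ⟨t, ht, rfl⟩; exact ht, fun hk ↦ ?_⟩
  obtain ⟨s, rfl⟩ := exists_ofBitsRev_eq (hk.trans (ofBitsRev_lt_two_pow b))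
  exact ⟨s ∆ σ, by simpa using hk, by simp⟩

lemma hammersleyShifted_eq (σ t : Fin n → Bool) :
    hammersleyShifted n σ t =
      ((Nat.ofBits t : ℝ) / 2 ^ n, (ofBitsRev (t ∆ σ) : ℝ) / 2 ^ n) := by
  have bval_eq (b : Bool) : bval b = b.toNat := by cases b <;> simp [bval]
  have two_pow_div {j k : ℕ} (h : j + k = n) : (2 : ℝ) ^ j / 2 ^ n = 1 / 2 ^ k := by
    rw [← h, pow_add]; field_simp
  ext
  · simp only [hammersleyShifted, ofBits_eq_sum, Nat.cast_sum, sum_div]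
    refine sum_congr rfl fun i _ ↦ ?_
    rw [bval_eq, Nat.cast_mul, mul_div_assoc, Nat.cast_pow, Nat.cast_ofNat,
      two_pow_div (k := n - i) (by omega), mul_one_div]
  · simp only [hammersleyShifted, ofBitsRev, ofBits_eq_sum, Nat.cast_sum, sum_div]
    rw [← Equiv.sum_comp Fin.revPerm]
    refine sum_congr rfl fun i _ ↦ ?_
    rw [bval_eq, Nat.cast_mul, mul_div_assoc, Nat.cast_pow, Nat.cast_ofNat,
      two_pow_div (k := (Fin.revPerm i : ℕ) + 1) (by simp; omega), mul_one_div]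
    simp [Bool.symmDiff_eq_xor]

/-- The number of points `t` of the shifted Hammersley set lying strictly below and to the left of
the grid point `(Nat.ofBits a / 2 ^ n, ofBitsRev b / 2 ^ n)`. -/
def gridCount (σ a b : Fin n → Bool) : ℕ :=
  #{t | Nat.ofBits t < Nat.ofBits a ∧ ofBitsRev (t ∆ σ) < ofBitsRev b}

/-- Whether the unique point in the horizontal strip of height `2⁻ⁿ` above
`ofBitsRev b / 2 ^ n` lies to the left of `Nat.ofBits a / 2 ^ n`. -/
def stripPointLeft (σ a b : Fin n → Bool) : Bool := Nat.ofBits (b ∆ σ) < Nat.ofBits a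

lemma stripPointLeft_succ (σ a b : Fin (n + 1) → Bool) :
    stripPointLeft σ a b = if a (Fin.last n) = (b (Fin.last n) ^^ σ (Fin.last n))
      then stripPointLeft (Fin.init σ) (Fin.init a) (Fin.init b) else a (Fin.last n) := by
  rw [stripPointLeft, decide_eq_decide.2 ofBits_lt_ofBits_iff]
  change decide ((b (Fin.last n) ∆ σ (Fin.last n)) < a (Fin.last n) ∨
    (b (Fin.last n) ∆ σ (Fin.last n)) = a (Fin.last n) ∧
      Nat.ofBits (Fin.init b ∆ Fin.init σ) < Nat.ofBits (Fin.init a)) = _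
  rw [Bool.symmDiff_eq_xor]
  cases a (Fin.last n) <;> cases (b (Fin.last n) ^^ σ (Fin.last n)) <;> simp [stripPointLeft]

-- Summation over the last digit `x` of a point: `P` and `Q` say that its other digits already put
-- it to the left of and below the grid point, `R` that they put it into the strip just above.
lemma sum_ite_lex_and_lex (P Q R : Prop) [Decidable P] [Decidable Q] [Decidable R]
    (hRQ : R → ¬ Q) (s c d : Bool) :
    ∑ x : Bool, (if (x < c ∨ x = c ∧ P) ∧ (Q ∨ R ∧ (x ^^ s) < d) then 1 else 0) =
      (if P ∧ Q then 1 else 0) + c.toNat * (if Q then 1 else 0) +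
        if R then d.toNat * (if c = s then decide P else c).toNat else 0 := by
  rw [Fintype.sum_bool]
  by_cases hP : P <;> by_cases hQ : Q <;> by_cases hR : R <;>
    first
    | exact absurd hQ (hRQ hR)
    | cases s <;> cases c <;> cases d <;> simp [hP, hQ, hR, Bool.lt_iff]

lemma gridCount_succ (σ a b : Fin (n + 1) → Bool) :
    gridCount σ a b = gridCount (Fin.init σ) (Fin.init a) (Fin.init b) +
      (a (Fin.last n)).toNat * ofBitsRev (Fin.init b) +
      (b (Fin.last n)).toNat * (if a (Fin.last n) = σ (Fin.last n)
        then stripPointLeft (Fin.init σ) (Fin.init a) (Fin.init b)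
        else a (Fin.last n)).toNat := by
  have init_symmDiff (t : Fin (n + 1) → Bool) : Fin.init (t ∆ σ) = Fin.init t ∆ Fin.init σ := rfl
  have below_ne (t : Fin n → Bool) : t ∆ Fin.init σ = Fin.init b →
      ¬ ofBitsRev (t ∆ Fin.init σ) < ofBitsRev (Fin.init b) := fun h ↦ by simp [h]
  have symmDiff_eq_iff (t : Fin n → Bool) :
      t ∆ Fin.init σ = Fin.init b ↔ t = Fin.init b ∆ Fin.init σ :=
    (symmDiff_left_involutive _).eq_iff
  simp only [gridCount, card_filter, ofBits_lt_ofBits_iff, ofBitsRev_lt_ofBitsRev_iff,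
    init_symmDiff, Pi.symmDiff_apply, Bool.symmDiff_eq_xor]
  rw [sum_eq_sum_init_last fun t x ↦ if (x < a (Fin.last n) ∨ x = a (Fin.last n) ∧
    Nat.ofBits t < Nat.ofBits (Fin.init a)) ∧
    (ofBitsRev (t ∆ Fin.init σ) < ofBitsRev (Fin.init b) ∨ t ∆ Fin.init σ = Fin.init b ∧
      (x ^^ σ (Fin.last n)) < b (Fin.last n)) then 1 else 0]
  simp only [sum_ite_lex_and_lex _ _ _ (below_ne _), sum_add_distrib, ← mul_sum]
  rw [← card_filter (fun t ↦ ofBitsRev (t ∆ Fin.init σ) < _), card_ofBitsRev_symmDiff_lt]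
  simp only [symmDiff_eq_iff, sum_ite_eq', mem_univ, if_true, stripPointLeft]

lemma zeroCount_eq_sum (σ : Fin n → Bool) : zeroCount σ = ∑ i, (!σ i).toNat := by
  rw [zeroCount, card_filter]
  exact sum_congr rfl fun i _ ↦ by cases σ i <;> rfl

lemma zeroCount_succ (σ : Fin (n + 1) → Bool) :
    zeroCount σ = zeroCount (Fin.init σ) + (!σ (Fin.last n)).toNat := by
  simp only [zeroCount_eq_sum, Fin.sum_univ_castSucc, Fin.init]

/-- `2 ^ n` times the local discrepancy at the grid point of index `(a, b)`, that is, at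
`(Nat.ofBits a / 2 ^ n, ofBitsRev b / 2 ^ n)`. -/
noncomputable def gridDisc (σ a b : Fin n → Bool) : ℝ :=
  gridCount σ a b - Nat.ofBits a * ofBitsRev b / 2 ^ n

/-- The process obtained from `gridDisc` by removing its drift. When the last digits of `a` and `b`
are chosen uniformly at random, `gridDisc` has drift `(e - x) / 4 ± 1 / 8`, where `e` is the
value of `stripPointLeft`, `x = Nat.ofBits a / 2 ^ n` and the sign is `+` for a zero digit of the
shift; the mean of `e - x` is halved, so that adding `(e - x) / 2` cancels the first
part of the drift. -/
noncomputable def gridMartingale (σ a b : Fin n → Bool) : ℝ :=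
  gridDisc σ a b + ((stripPointLeft σ a b).toNat - Nat.ofBits a / 2 ^ n) / 2 -
    (2 * zeroCount σ - n) / 8

/-- The increment of `gridMartingale` when the digits `s`, `c`, `d` are appended to `σ`, `a`, `b`,
in terms of the previous values `e` of `stripPointLeft` and `x = Nat.ofBits a / 2 ^ n`. -/
noncomputable def gridIncrement (e : Bool) (x : ℝ) (s c d : Bool) : ℝ :=
  d.toNat * ((if c = s then e else c).toNat - (c.toNat + x) / 2) +
    (((if c = (d ^^ s) then e else c).toNat - (c.toNat + x) / 2) - (e.toNat - x)) / 2 -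
      (2 * (!s).toNat - 1) / 8

lemma gridMartingale_succ (σ a b : Fin (n + 1) → Bool) :
    gridMartingale σ a b = gridMartingale (Fin.init σ) (Fin.init a) (Fin.init b) +
      gridIncrement (stripPointLeft (Fin.init σ) (Fin.init a) (Fin.init b))
        (Nat.ofBits (Fin.init a) / 2 ^ n) (σ (Fin.last n)) (a (Fin.last n)) (b (Fin.last n)) := by
  rw [gridMartingale, gridMartingale, gridDisc, gridDisc, gridIncrement, stripPointLeft_succ,
    gridCount_succ, zeroCount_succ, ofBits_init_last a, ofBitsRev_init_last b]
  push_cast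
  field_simp
  ring

lemma sum_gridIncrement (e : Bool) (x : ℝ) (s : Bool) :
    ∑ cd : Bool × Bool, gridIncrement e x s cd.1 cd.2 = 0 := by
  simp only [Fintype.sum_prod_type, Fintype.sum_bool]
  cases e <;> cases s <;> simp [gridIncrement] <;> ring

lemma abs_gridIncrement_le (e : Bool) {x : ℝ} (hx : x ∈ Set.Icc 0 1) (s c d : Bool) :
    |gridIncrement e x s c d| ≤ 1 := by
  obtain ⟨hx0, hx1⟩ := hx
  rw [gridIncrement, abs_le]
  cases e <;> cases s <;> cases c <;> cases d <;>
    simp only [Bool.toNat_true, Bool.toNat_false, Bool.not_true, Bool.not_false, Bool.xor_true,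
      Bool.xor_false, Bool.true_eq_false, Bool.false_eq_true, if_true, if_false] <;>
    constructor <;> push_cast <;> linarith

lemma ofBits_div_mem_Icc (a : Fin n → Bool) : (Nat.ofBits a : ℝ) / 2 ^ n ∈ Set.Icc 0 1 :=
  ⟨by positivity, div_le_one_of_le₀ (mod_cast (Nat.ofBits_lt_two_pow a).le) (by positivity)⟩

lemma sum_exp_mul_le_of_sum_eq_zero {ι : Type*} [Fintype ι] {f : ι → ℝ} (hf : ∀ i, |f i| ≤ 1)
    (hsum : ∑ i, f i = 0) (l : ℝ) :
    ∑ i, Real.exp (l * f i) ≤ Fintype.card ι * Real.exp (l ^ 2 / 2) :=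
  calc ∑ i, Real.exp (l * f i)
      ≤ ∑ i, (Real.cosh l + f i * Real.sinh l) := by
        gcongr with i
        rw [mul_comm]
        exact Real.exp_mul_le_cosh_add_mul_sinh (hf i) l
    _ = Fintype.card ι * Real.cosh l := by simp [sum_add_distrib, ← sum_mul, hsum]
    _ ≤ Fintype.card ι * Real.exp (l ^ 2 / 2) := by gcongr; exact Real.cosh_le_exp_half_sq l

lemma sum_exp_mul_gridMartingale_succ_le (l : ℝ) (σ : Fin (n + 1) → Bool) :
    ∑ a, ∑ b, Real.exp (l * gridMartingale σ a b) ≤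
      (∑ a, ∑ b, Real.exp (l * gridMartingale (Fin.init σ) a b)) *
        (4 * Real.exp (l ^ 2 / 2)) := by
  let term (a b : Fin n → Bool) (c d : Bool) : ℝ :=
    Real.exp (l * gridMartingale (Fin.init σ) a b) * Real.exp (l * gridIncrement
      (stripPointLeft (Fin.init σ) a b) (Nat.ofBits a / 2 ^ n) (σ (Fin.last n)) c d)
  have hoeffding (a b : Fin n → Bool) := sum_exp_mul_le_of_sum_eq_zero
    (fun cd : Bool × Bool ↦ abs_gridIncrement_le (stripPointLeft (Fin.init σ) a b)
      (ofBits_div_mem_Icc a) (σ (Fin.last n)) cd.1 cd.2) (sum_gridIncrement _ _ _) l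
  calc ∑ a, ∑ b, Real.exp (l * gridMartingale σ a b)
      = ∑ a : Fin (n + 1) → Bool, ∑ b : Fin (n + 1) → Bool,
          term (Fin.init a) (Fin.init b) (a (Fin.last n)) (b (Fin.last n)) := by
        simp only [gridMartingale_succ, mul_add, Real.exp_add, term]
    _ = ∑ a, ∑ b, ∑ cd : Bool × Bool, term a b cd.1 cd.2 := by
        simp only [Fintype.sum_prod_type]
        rw [sum_eq_sum_init_last fun a c ↦ ∑ b : Fin (n + 1) → Bool,
          term a (Fin.init b) c (b (Fin.last n))]
        exact sum_congr rfl fun a _ ↦ (sum_congr rfl fun c _ ↦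
          sum_eq_sum_init_last fun b d ↦ term a b c d).trans sum_comm
    _ ≤ ∑ a, ∑ b, Real.exp (l * gridMartingale (Fin.init σ) a b) *
          (4 * Real.exp (l ^ 2 / 2)) := by
        simp only [term, ← mul_sum]
        gcongr with a _ b
        simpa using hoeffding a b
    _ = _ := by simp only [sum_mul]

lemma sum_exp_mul_gridMartingale_le (l : ℝ) (σ : Fin n → Bool) :
    ∑ a, ∑ b, Real.exp (l * gridMartingale σ a b) ≤ (4 * Real.exp (l ^ 2 / 2)) ^ n := by
  induction n with
  | zero => simp [gridMartingale, gridDisc, gridCount, zeroCount, stripPointLeft, ofBitsRev]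
  | succ n ih =>
    rw [pow_succ]
    exact (sum_exp_mul_gridMartingale_succ_le l σ).trans (by gcongr; exact ih _)

/-- The closed dyadic square of side length `2⁻ⁿ` whose lower left corner is the grid point of
index `(a, b)`. -/
def gridCell (a b : Fin n → Bool) : Set (ℝ × ℝ) :=
  Set.Icc ((Nat.ofBits a : ℝ) / 2 ^ n) ((Nat.ofBits a + 1 : ℝ) / 2 ^ n) ×ˢ
    Set.Icc ((ofBitsRev b : ℝ) / 2 ^ n) ((ofBitsRev b + 1 : ℝ) / 2 ^ n)

lemma measurableSet_gridCell (a b : Fin n → Bool) : MeasurableSet (gridCell a b) :=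
  measurableSet_Icc.prod measurableSet_Icc

lemma volume_gridCell (a b : Fin n → Bool) :
    volume (gridCell a b) = ENNReal.ofReal (1 / 4 ^ n) := by
  rw [gridCell, Measure.volume_eq_prod, Measure.prod_prod, Real.volume_Icc, Real.volume_Icc,
    ← sub_div, ← sub_div, add_sub_cancel_left, add_sub_cancel_left,
    ← ENNReal.ofReal_mul (by positivity), div_mul_div_comm, ← mul_pow]
  norm_num

lemma exists_lt_mem_Icc_div {N : ℕ} (hN : N ≠ 0) {x : ℝ} (hx : x ∈ Set.Icc 0 1) :
    ∃ k < N, x ∈ Set.Icc ((k : ℝ) / N) ((k + 1 : ℝ) / N) := by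
  have hN' : (0 : ℝ) < N := by positivity
  rcases hx.2.eq_or_lt with rfl | hx1
  · refine ⟨N - 1, by omega, ?_⟩
    rw [Nat.cast_pred (by omega), sub_add_cancel, div_self hN'.ne']
    exact ⟨div_le_one_of_le₀ (by linarith) hN'.le, le_rfl⟩
  · have hxN : 0 ≤ x * N := mul_nonneg hx.1 hN'.le
    refine ⟨⌊x * N⌋₊, ?_, ?_, ?_⟩
    · rw [Nat.floor_lt hxN]
      exact mul_lt_of_lt_one_left hN' hx1
    · exact (div_le_iff₀ hN').2 (Nat.floor_le hxN)
    · exact (le_div_iff₀ hN').2 (Nat.lt_floor_add_one _).le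

lemma Icc_subset_iUnion_gridCell :
    Set.Icc (0 : ℝ × ℝ) 1 ⊆ ⋃ ab : (Fin n → Bool) × (Fin n → Bool), gridCell ab.1 ab.2 := by
  intro t ht
  obtain ⟨j, hj, hj'⟩ := exists_lt_mem_Icc_div (N := 2 ^ n) (by positivity) ⟨ht.1.1, ht.2.1⟩
  obtain ⟨k, hk, hk'⟩ := exists_lt_mem_Icc_div (N := 2 ^ n) (by positivity) ⟨ht.1.2, ht.2.2⟩
  obtain ⟨a, rfl⟩ := exists_ofBits_eq hj
  obtain ⟨b, rfl⟩ := exists_ofBitsRev_eq hk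
  push_cast at hj' hk'
  exact Set.mem_iUnion.2 ⟨(a, b), hj', hk'⟩

lemma setIntegral_le_sum_of_subset_iUnion {ι Ω : Type*} [Fintype ι] [MeasurableSpace Ω]
    {μ : Measure Ω} {s : Set Ω} {t : ι → Set Ω} (hs : MeasurableSet s)
    (ht : ∀ i, MeasurableSet (t i)) (hμ : ∀ i, μ (t i) ≠ ⊤) (hst : s ⊆ ⋃ i, t i) {f : Ω → ℝ}
    (hf : ∀ ω, 0 ≤ f ω) {c : ι → ℝ} (hfc : ∀ i, ∀ ω ∈ t i, f ω ≤ c i) :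
    ∫ ω in s, f ω ∂μ ≤ ∑ i, μ.real (t i) * c i := by
  have hint (i : ι) : Integrable ((t i).indicator fun _ ↦ c i) μ :=
    (integrable_indicator_iff (ht i)).2 (integrableOn_const (hμ i))
  have hnonneg (ω : Ω) (i : ι) : 0 ≤ (t i).indicator (fun _ ↦ c i) ω :=
    Set.indicator_apply_nonneg fun hω ↦ (hf ω).trans (hfc i ω hω)
  have hle (ω : Ω) : s.indicator f ω ≤ ∑ i, (t i).indicator (fun _ ↦ c i) ω := by
    refine Set.indicator_apply_le' (fun hω ↦ ?_) fun _ ↦ sum_nonneg fun i _ ↦ hnonneg ω i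
    obtain ⟨i, hi⟩ := Set.mem_iUnion.1 (hst hω)
    calc f ω ≤ c i := hfc i ω hi
      _ = (t i).indicator (fun _ ↦ c i) ω := (Set.indicator_of_mem hi fun _ ↦ c i).symm
      _ ≤ _ := single_le_sum (f := fun i ↦ (t i).indicator (fun _ ↦ c i) ω)
        (fun i _ ↦ hnonneg ω i) (mem_univ i)
  calc ∫ ω in s, f ω ∂μ = ∫ ω, s.indicator f ω ∂μ := (integral_indicator hs).symm
    _ ≤ ∫ ω, ∑ i, (t i).indicator (fun _ ↦ c i) ω ∂μ :=
      integral_mono_of_nonneg (.of_forall fun ω ↦ Set.indicator_nonneg (fun ω _ ↦ hf ω) ω)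
        (integrable_finsetSum _ fun i _ ↦ hint i) (.of_forall hle)
    _ = ∑ i, μ.real (t i) * c i := by
      simp only [integral_finsetSum _ fun i _ ↦ hint i, integral_indicator (ht _),
        setIntegral_const, smul_eq_mul]

lemma setIntegral_Icc_le_sum_gridCell {f : ℝ × ℝ → ℝ} (hf : ∀ t, 0 ≤ f t)
    {c : (Fin n → Bool) → (Fin n → Bool) → ℝ} (hfc : ∀ a b, ∀ t ∈ gridCell a b, f t ≤ c a b) :
    ∫ t in Set.Icc (0 : ℝ × ℝ) 1, f t ≤ (∑ a, ∑ b, c a b) / 4 ^ n := by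
  have hvol (a b : Fin n → Bool) : volume.real (gridCell a b) = 1 / 4 ^ n := by
    rw [measureReal_def, volume_gridCell, ENNReal.toReal_ofReal (by positivity)]
  calc ∫ t in Set.Icc (0 : ℝ × ℝ) 1, f t
      ≤ ∑ ab : (Fin n → Bool) × (Fin n → Bool),
          volume.real (gridCell ab.1 ab.2) * c ab.1 ab.2 :=
        setIntegral_le_sum_of_subset_iUnion (μ := volume)
          (t := fun ab : (Fin n → Bool) × (Fin n → Bool) ↦ gridCell ab.1 ab.2)
          (c := fun ab ↦ c ab.1 ab.2) measurableSet_Icc (fun ab ↦ measurableSet_gridCell ab.1 ab.2)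
          (fun ab ↦ by rw [volume_gridCell]; exact ENNReal.ofReal_ne_top)
          Icc_subset_iUnion_gridCell hf fun ab ↦ hfc ab.1 ab.2
    _ = (∑ a, ∑ b, c a b) / 4 ^ n := by
        simp only [hvol, ← mul_sum, Fintype.sum_prod_type]
        ring

lemma countIn_hammersleyShifted (σ : Fin n → Bool) (t : ℝ × ℝ) :
    countIn (hammersleyShifted n σ) t =
      #{k | (Nat.ofBits k : ℝ) / 2 ^ n < t.1 ∧ (ofBitsRev (k ∆ σ) : ℝ) / 2 ^ n < t.2} := by
  have hnonneg (k : ℕ) : (0 : ℝ) ≤ k / 2 ^ n := by positivity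
  simp only [countIn, hammersleyShifted_eq, hnonneg, true_and]

lemma gridCount_le_countIn (σ : Fin n → Bool) {a b : Fin n → Bool} {t : ℝ × ℝ}
    (ht : t ∈ gridCell a b) : gridCount σ a b ≤ countIn (hammersleyShifted n σ) t := by
  rw [countIn_hammersleyShifted]
  refine card_le_card (monotone_filter_right _ fun k _ ⟨hX, hY⟩ ↦
    ⟨lt_of_lt_of_le ?_ ht.1.1, lt_of_lt_of_le ?_ ht.2.1⟩) <;> gcongr

lemma countIn_le_gridCount_add_two (σ : Fin n → Bool) {a b : Fin n → Bool} {t : ℝ × ℝ}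
    (ht : t ∈ gridCell a b) : countIn (hammersleyShifted n σ) t ≤ gridCount σ a b + 2 := by
  have lt_succ {x : ℝ} {j k : ℕ} (hj : (j : ℝ) / 2 ^ n < x) (hk : x ≤ (k + 1 : ℝ) / 2 ^ n) :
      j < k + 1 := by
    have := (div_lt_div_iff_of_pos_right (by positivity)).1 (hj.trans_le hk)
    exact_mod_cast this
  rw [countIn_hammersleyShifted]
  -- Apart from `a` and `b ∆ σ`, which sit in the column and the row of the cell, every point of
  -- the larger box already lies in the smaller one.
  calc _ ≤ #(insert a (insert (b ∆ σ) ({k | Nat.ofBits k < Nat.ofBits a ∧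
        ofBitsRev (k ∆ σ) < ofBitsRev b} : Finset (Fin n → Bool)))) := by
        refine card_le_card fun k hk ↦ ?_
        obtain ⟨hX, hY⟩ := (mem_filter_univ k).1 hk
        simp only [mem_insert, mem_filter_univ]
        by_cases hka : k = a
        · exact .inl hka
        by_cases hkb : k ∆ σ = b
        · exact .inr (.inl (by rw [← hkb, symmDiff_symmDiff_cancel_right]))
        have hXa := ofBits_injective.ne hka
        have hYb := ofBitsRev_injective.ne hkb
        have := lt_succ hX ht.1.2
        have := lt_succ hY ht.2.2
        exact .inr (.inr (by omega))
    _ ≤ gridCount σ a b + 2 :=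
        (card_insert_le _ _).trans (Nat.succ_le_succ (card_insert_le _ _))

lemma mul_sub_mul_mem_Icc {x y u v h : ℝ} (hu0 : 0 ≤ u) (hu1 : u ≤ 1) (hv0 : 0 ≤ v)
    (hv1 : v + h ≤ 1) (hx : x ∈ Set.Icc u (u + h)) (hy : y ∈ Set.Icc v (v + h)) :
    x * y - u * v ∈ Set.Icc 0 (2 * h) := by
  obtain ⟨hux, hxu⟩ := hx
  obtain ⟨hvy, hyv⟩ := hy
  constructor <;> nlinarith

lemma abs_two_pow_mul_localDisc_sub_gridDisc_le (σ : Fin n → Bool) {a b : Fin n → Bool}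
    {t : ℝ × ℝ} (ht : t ∈ gridCell a b) :
    |2 ^ n * localDisc (hammersleyShifted n σ) t - gridDisc σ a b| ≤ 2 := by
  have hcount_ge : (gridCount σ a b : ℝ) ≤ countIn (hammersleyShifted n σ) t :=
    mod_cast gridCount_le_countIn σ ht
  have hcount_le : (countIn (hammersleyShifted n σ) t : ℝ) ≤ gridCount σ a b + 2 :=
    mod_cast countIn_le_gridCount_add_two σ ht
  have hb : (ofBitsRev b : ℝ) / 2 ^ n + 1 / 2 ^ n ≤ 1 := by
    rw [← add_div, div_le_one (by positivity)]
    exact_mod_cast ofBitsRev_lt_two_pow b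
  simp only [gridCell, Set.mem_prod, add_div] at ht
  obtain ⟨harea_ge, harea_le⟩ := mul_sub_mul_mem_Icc (ofBits_div_mem_Icc a).1
    (ofBits_div_mem_Icc a).2 (by positivity) hb ht.1 ht.2
  set area := t.1 * t.2 - Nat.ofBits a / 2 ^ n * (ofBitsRev b / 2 ^ n) with harea
  have hscaled_ge : 0 ≤ 2 ^ n * area := by positivity
  have hscaled_le : 2 ^ n * area ≤ 2 :=
    calc 2 ^ n * area ≤ 2 ^ n * (2 * (1 / 2 ^ n)) := by gcongr
      _ = 2 := by field_simp
  have heq : 2 ^ n * localDisc (hammersleyShifted n σ) t - gridDisc σ a b =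
      countIn (hammersleyShifted n σ) t - gridCount σ a b - 2 ^ n * area := by
    simp only [localDisc, gridDisc, harea, Fintype.card_fun, Fintype.card_bool, Fintype.card_fin]
    push_cast
    field_simp
    ring
  rw [heq, abs_le]
  constructor <;> linarith

lemma abs_two_pow_mul_localDisc_le (σ : Fin n → Bool) {a b : Fin n → Bool} {t : ℝ × ℝ}
    (ht : t ∈ gridCell a b) :
    |2 ^ n * localDisc (hammersleyShifted n σ) t| ≤
      |gridMartingale σ a b| + 5 / 2 + |2 * (zeroCount σ : ℝ) - n| / 8 := by
  have hleft : |((stripPointLeft σ a b).toNat : ℝ) - Nat.ofBits a / 2 ^ n| ≤ 1 := by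
    obtain ⟨hx0, hx1⟩ := ofBits_div_mem_Icc a
    rw [abs_le]
    cases stripPointLeft σ a b <;> simp only [Bool.toNat_false, Bool.toNat_true] <;>
      constructor <;> push_cast <;> linarith
  have hgrid : |gridDisc σ a b| ≤
      |gridMartingale σ a b| + 1 / 2 + |2 * (zeroCount σ : ℝ) - n| / 8 := by
    rw [gridMartingale]
    grind
  linarith [abs_sub_abs_le_abs_sub (2 ^ n * localDisc (hammersleyShifted n σ) t) (gridDisc σ a b),
    abs_two_pow_mul_localDisc_sub_gridDisc_le σ ht]

lemma abs_localDisc_rpow_le {p r : ℝ} (hp : 0 ≤ p) (hr : 1 ≤ r) {σ : Fin n → Bool}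
    (hσ : |2 * (zeroCount σ : ℝ) - n| ≤ r) {a b : Fin n → Bool} {t : ℝ × ℝ}
    (ht : t ∈ gridCell a b) :
    |localDisc (hammersleyShifted n σ) t| ^ p ≤ (p * (r / 2 ^ n)) ^ p * Real.exp 3 *
      (Real.exp (r⁻¹ * gridMartingale σ a b) + Real.exp (-r⁻¹ * gridMartingale σ a b)) := by
  have hr0 : 0 < r := by linarith
  have hscale : |2 ^ n / r| = 2 ^ n / r := abs_of_pos (by positivity)
  have hexponent : 2 ^ n / r * |localDisc (hammersleyShifted n σ) t| ≤
      3 + |r⁻¹ * gridMartingale σ a b| := by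
    have hdisc := abs_two_pow_mul_localDisc_le σ ht
    rw [abs_mul, abs_of_pos (by positivity : (0 : ℝ) < 2 ^ n)] at hdisc
    rw [abs_mul, abs_of_pos (inv_pos.2 hr0), div_mul_eq_mul_div, div_le_iff₀ hr0, add_mul,
      mul_right_comm, inv_mul_cancel₀ hr0.ne']
    linarith
  calc |localDisc (hammersleyShifted n σ) t| ^ p
      ≤ (p / (2 ^ n / r)) ^ p * Real.exp (2 ^ n / r * |localDisc (hammersleyShifted n σ) t|) := by
        simpa only [hscale] using ProbabilityTheory.rpow_abs_le_mul_exp_abs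
          (localDisc (hammersleyShifted n σ) t) hp (t := 2 ^ n / r) (by positivity)
    _ ≤ (p / (2 ^ n / r)) ^ p * Real.exp (3 + |r⁻¹ * gridMartingale σ a b|) := by gcongr
    _ = (p * (r / 2 ^ n)) ^ p * Real.exp 3 * Real.exp |r⁻¹ * gridMartingale σ a b| := by
        rw [Real.exp_add, div_eq_mul_inv, inv_div, mul_assoc]
    _ ≤ _ := by
        rw [neg_mul]
        gcongr
        exact Real.exp_abs_le _

lemma sum_exp_mul_gridMartingale_le_of_sq_mul_le {l : ℝ} (hl : l ^ 2 * n ≤ 1)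
    (σ : Fin n → Bool) :
    ∑ a, ∑ b, Real.exp (l * gridMartingale σ a b) ≤ 4 ^ n * Real.exp (1 / 2) := by
  refine (sum_exp_mul_gridMartingale_le l σ).trans ?_
  rw [mul_pow, ← Real.exp_nat_mul]
  gcongr
  linarith

lemma setIntegral_abs_localDisc_rpow_le {p r : ℝ} (hp : 0 ≤ p) (hr : 1 ≤ r) (hn : √n ≤ r)
    {σ : Fin n → Bool} (hσ : |2 * (zeroCount σ : ℝ) - n| ≤ r) :
    ∫ t in Set.Icc (0 : ℝ × ℝ) 1, |localDisc (hammersleyShifted n σ) t| ^ p ≤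
      (p * (r / 2 ^ n)) ^ p * (2 * Real.exp (7 / 2)) := by
  have hr0 : 0 < r := by linarith
  have hl : r⁻¹ ^ 2 * n ≤ 1 := by
    rw [inv_pow, inv_mul_le_one₀ (by positivity)]
    exact (Real.sqrt_le_left hr0.le).1 hn
  have hpos := sum_exp_mul_gridMartingale_le_of_sq_mul_le hl σ
  have hneg := sum_exp_mul_gridMartingale_le_of_sq_mul_le (l := -r⁻¹) (by rwa [neg_sq]) σ
  calc ∫ t in Set.Icc (0 : ℝ × ℝ) 1, |localDisc (hammersleyShifted n σ) t| ^ p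
      ≤ (∑ a, ∑ b, (p * (r / 2 ^ n)) ^ p * Real.exp 3 *
          (Real.exp (r⁻¹ * gridMartingale σ a b) +
            Real.exp (-r⁻¹ * gridMartingale σ a b))) / 4 ^ n :=
        setIntegral_Icc_le_sum_gridCell (fun t ↦ by positivity)
          fun a b t ht ↦ abs_localDisc_rpow_le hp hr hσ ht
    _ ≤ (p * (r / 2 ^ n)) ^ p * Real.exp 3 *
          (4 ^ n * Real.exp (1 / 2) + 4 ^ n * Real.exp (1 / 2)) / 4 ^ n := by
        simp only [← mul_sum, sum_add_distrib]
        gcongr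
    _ = (p * (r / 2 ^ n)) ^ p * (2 * (Real.exp 3 * Real.exp (1 / 2))) := by
        field_simp
        ring
    _ = (p * (r / 2 ^ n)) ^ p * (2 * Real.exp (7 / 2)) := by
        rw [← Real.exp_add]
        norm_num

lemma LpDisc_hammersleyShifted_le {p r : ℝ} (hp : 0 < p) (hr : 1 ≤ r) (hn : √n ≤ r)
    {σ : Fin n → Bool} (hσ : |2 * (zeroCount σ : ℝ) - n| ≤ r) :
    LpDisc p (hammersleyShifted n σ) ≤ (2 * Real.exp (7 / 2)) ^ (1 / p) * p * r / 2 ^ n := by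
  have : 0 < r := by linarith
  calc LpDisc p (hammersleyShifted n σ)
      ≤ ((p * (r / 2 ^ n)) ^ p * (2 * Real.exp (7 / 2))) ^ (1 / p) :=
        Real.rpow_le_rpow (integral_nonneg fun t ↦ by positivity)
          (setIntegral_abs_localDisc_rpow_le hp.le hr hn hσ) (by positivity)
    _ = (2 * Real.exp (7 / 2)) ^ (1 / p) * p * r / 2 ^ n := by
        rw [Real.mul_rpow (by positivity) (by positivity), one_div,
          Real.rpow_rpow_inv (by positivity) hp.ne']
        ring

end Hammersley

theorem statement0_general (p : ℝ) (hp : 0 < p) :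
    ∃ C : ℝ, 0 < C ∧ ∀ n : ℕ, 0 < n → ∀ (σ : Fin n → Bool) (c : ℝ),
      |2 * (zeroCount σ : ℝ) - n| ≤ c * Real.sqrt n →
      LpDisc p (hammersleyShifted n σ) ≤
        C * (1 + c) * Real.sqrt (Real.log ((2 : ℝ) ^ n)) / 2 ^ n := by
  have : 0 < √(Real.log 2) := Real.sqrt_pos.2 (Real.log_pos one_lt_two)
  refine ⟨(2 * Real.exp (7 / 2)) ^ (1 / p) * p / √(Real.log 2), by positivity,
    fun n hn σ c hσ ↦ ?_⟩
  have hsqrt : 1 ≤ √(n : ℝ) := Real.one_le_sqrt.2 (mod_cast hn)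
  have hc : 0 ≤ c * √n := (abs_nonneg _).trans hσ
  refine (Hammersley.LpDisc_hammersleyShifted_le (r := (1 + c) * √n) hp (by linarith)
    (by linarith) (by linarith)).trans_eq ?_
  rw [Real.log_pow, Real.sqrt_mul (by positivity)]
  field_simp

/-- If the number of zero components of the shift is balanced, `|2aₙ - n| ≤ c√n`, then
the digit shifted Hammersley point set has optimal `L_p`-discrepancy `≪ √(log N)/N`. -/
theorem statement0 (p : ℝ) (hp : 1 < p) (c : ℝ) (hc : 0 ≤ c) :
    ∃ C : ℝ, 0 < C ∧ ∀ n : ℕ, 0 < n → ∀ σ : Fin n → Bool,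
      |2 * (zeroCount σ : ℝ) - n| ≤ c * Real.sqrt n →
      LpDisc p (hammersleyShifted n σ) ≤
        C * Real.sqrt (Real.log ((2 : ℝ) ^ n)) / 2 ^ n := by
  obtain ⟨C, hC, hbound⟩ := statement0_general p (by linarith)
  exact ⟨C * (1 + c), by positivity, fun n hn σ hσ ↦ hbound n hn σ c hσ⟩
end

section
/- Let p ∈ (1,∞). There exists a constant c_p > 0 such that for all n ∈ ℕ and all shifts σ ∈ {0,1}^n, the L_p-discrepancy of the two-dimensional digit shifted Hammersley point set with N = 2^n points satisfies L_{p,N}(R_{n,σ}) ≥ c_p · |(2a_n + 4 − n)/2^{n+3} + 1/2^{2(n+1)}|, where a_n = #{j : σ_j = 0}. Consequently, if L_{p,N}(R_{n,σ}) ≤ C√(log N)/N for a family of shifts, then |2a_n − n| ≤ C'√n for a constant C' depending only on p and C. -/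
/-!
The lower bound comes from a single Haar coefficient, the mean `∫ D_N(P, t) dt`: on the unit square,
which has measure one, Jensen's inequality bounds its absolute value by the `L_p`-norm of `D_N`.

The mean is computed exactly.  A point `(x, y)` is counted by the boxes `[0, t)` with `x < t₁` and
`y < t₂`, so the mean is the average of `(1 - x) * (1 - y)` over `P`, minus `1 / 4`.  For the
shifted Hammersley points both factors are affine in the signs `(-1)^{t_i}`, which have mean zero
and are orthonormal for the uniform measure on digit vectors.  Besides the constant terms only the
diagonal terms survive, and the `i`-th one is `(-1)^{σ_i} / 2^{n + 3}` because the weights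
`2^{-(n + 1 - i)}` and `2^{-i}` of the `i`-th digit always multiply to `2^{-(n + 1)}`.
-/

open MeasureTheory

/-! ### Comparing the discrepancy with its mean -/

lemma norm_integral_le_rpow_integral_norm_rpow {α E : Type*} [MeasurableSpace α] {μ : Measure α}
    [IsProbabilityMeasure μ] [NormedAddCommGroup E] [NormedSpace ℝ E] {p : ℝ} (hp : 1 ≤ p)
    {f : α → E} (hf : MemLp f (ENNReal.ofReal p) μ) :
    ‖∫ x, f x ∂μ‖ ≤ (∫ x, ‖f x‖ ^ p ∂μ) ^ (1 / p) := by
  have hp0 : 0 < p := by linarith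
  have hf_int : Integrable f μ := hf.integrable (by simpa using hp)
  have hfp_int : Integrable (fun x => ‖f x‖ ^ p) μ := by
    simpa only [ENNReal.toReal_ofReal hp0.le] using
      hf.integrable_norm_rpow (by simpa using hp0) ENNReal.ofReal_ne_top
  have jensen : (∫ x, ‖f x‖ ∂μ) ^ p ≤ ∫ x, ‖f x‖ ^ p ∂μ :=
    (convexOn_rpow hp).map_integral_le (Real.continuous_rpow_const hp0.le).continuousOn isClosed_Ici
      (.of_forall fun x => norm_nonneg (f x)) hf_int.norm hfp_int
  refine (norm_integral_le_integral_norm f).trans ?_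
  rwa [one_div, Real.le_rpow_inv_iff_of_pos (by positivity) (by positivity) hp0]

instance isProbabilityMeasure_restrict_unitSquare :
    IsProbabilityMeasure ((volume : Measure (ℝ × ℝ)).restrict (Set.Icc 0 1)) :=
  ⟨by
    rw [Measure.restrict_apply_univ, Set.Icc_prod_eq, Measure.volume_eq_prod, Measure.prod_prod]
    simp⟩

section PointSet

variable {ι : Type*} [Fintype ι] (P : ι → ℝ × ℝ)

lemma measurable_countIn : Measurable fun t => (countIn P t : ℝ) := by
  simp only [countIn, Finset.card_filter, Nat.cast_sum, Nat.cast_ite, Nat.cast_one, Nat.cast_zero]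
  refine Finset.measurable_sum _ fun k _ => Measurable.ite ?_ measurable_const measurable_const
  exact (MeasurableSet.const _).inter <| (measurableSet_lt measurable_const measurable_fst).inter <|
    (MeasurableSet.const _).inter (measurableSet_lt measurable_const measurable_snd)

lemma measurable_localDisc : Measurable (localDisc P) :=
  ((measurable_countIn P).div_const _).sub (measurable_fst.mul measurable_snd)

lemma abs_localDisc_le_one {t : ℝ × ℝ} (ht : t ∈ Set.Icc (0 : ℝ × ℝ) 1) :
    |localDisc P t| ≤ 1 := by
  obtain ⟨⟨ht₁, ht₂⟩, ht₁', ht₂'⟩ := ht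
  have count_le : (countIn P t : ℝ) / Fintype.card ι ≤ 1 :=
    div_le_one_of_le₀ (mod_cast Finset.card_le_univ _) (by positivity)
  have area_nonneg : 0 ≤ t.1 * t.2 := mul_nonneg ht₁ ht₂
  have area_le : t.1 * t.2 ≤ 1 := mul_le_one₀ ht₁' ht₂ ht₂'
  have count_nonneg : 0 ≤ (countIn P t : ℝ) / Fintype.card ι := by positivity
  rw [localDisc, abs_le]
  constructor <;> linarith

lemma abs_integral_localDisc_le_LpDisc {p : ℝ} (hp : 1 ≤ p) :
    |∫ t in Set.Icc (0 : ℝ × ℝ) 1, localDisc P t| ≤ LpDisc p P :=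
  norm_integral_le_rpow_integral_norm_rpow hp <|
    MemLp.of_bound (measurable_localDisc P).aestronglyMeasurable 1 <|
      ae_restrict_of_forall_mem measurableSet_Icc fun _ ht => abs_localDisc_le_one P ht

/-! ### The mean of the local discrepancy -/

variable {P}

lemma countIn_eq_sum_indicator (hP : ∀ k, 0 ≤ P k) (t : ℝ × ℝ) :
    (countIn P t : ℝ) =
      ∑ k, (Set.Ioi (P k).1 ×ˢ Set.Ioi (P k).2).indicator (fun _ => (1 : ℝ)) t := by
  have hP₁ (k : ι) : 0 ≤ (P k).1 := (hP k).1
  have hP₂ (k : ι) : 0 ≤ (P k).2 := (hP k).2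
  simp only [countIn, hP₁, hP₂, true_and, Finset.card_filter, Nat.cast_sum, Nat.cast_ite,
    Nat.cast_one, Nat.cast_zero, Set.indicator_apply, Set.mem_prod, Set.mem_Ioi]

lemma setIntegral_unitSquare_indicator_Ioi_prod {x : ℝ × ℝ} (hx : x ∈ Set.Icc (0 : ℝ × ℝ) 1) :
    ∫ t in Set.Icc (0 : ℝ × ℝ) 1, (Set.Ioi x.1 ×ˢ Set.Ioi x.2).indicator (fun _ => (1 : ℝ)) t =
      (1 - x.1) * (1 - x.2) := by
  have inter_eq {a : ℝ} (ha : 0 ≤ a) : Set.Icc 0 1 ∩ Set.Ioi a = Set.Ioc a 1 := by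
    ext s
    simp only [Set.mem_inter_iff, Set.mem_Icc, Set.mem_Ioi, Set.mem_Ioc]
    grind
  obtain ⟨⟨hx₁, hx₂⟩, hx₁', hx₂'⟩ := hx
  simp only [Prod.fst_zero, Prod.fst_one, Prod.snd_zero, Prod.snd_one] at hx₁ hx₂ hx₁' hx₂'
  rw [setIntegral_indicator (measurableSet_Ioi.prod measurableSet_Ioi), Set.Icc_prod_eq,
    Set.prod_inter_prod, setIntegral_const, smul_eq_mul, mul_one, Measure.volume_eq_prod,
    measureReal_prod_prod]
  simp only [Prod.fst_zero, Prod.fst_one, Prod.snd_zero, Prod.snd_one, inter_eq hx₁, inter_eq hx₂,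
    Real.volume_real_Ioc_of_le hx₁', Real.volume_real_Ioc_of_le hx₂']

lemma setIntegral_unitSquare_mul : ∫ t in Set.Icc (0 : ℝ × ℝ) 1, t.1 * t.2 = 1 / 4 := by
  rw [Set.Icc_prod_eq, Measure.volume_eq_prod, setIntegral_prod_mul (fun x : ℝ => x) fun x : ℝ => x]
  simp only [Prod.fst_zero, Prod.fst_one, Prod.snd_zero, Prod.snd_one,
    integral_Icc_eq_integral_Ioc, ← intervalIntegral.integral_of_le zero_le_one, integral_id]
  norm_num

lemma integral_localDisc (hP : ∀ k, P k ∈ Set.Icc (0 : ℝ × ℝ) 1) :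
    ∫ t in Set.Icc (0 : ℝ × ℝ) 1, localDisc P t =
      (∑ k, (1 - (P k).1) * (1 - (P k).2)) / Fintype.card ι - 1 / 4 := by
  have indicator_int (k : ι) : IntegrableOn
      ((Set.Ioi (P k).1 ×ˢ Set.Ioi (P k).2).indicator fun _ => (1 : ℝ)) (Set.Icc (0 : ℝ × ℝ) 1) :=
    (integrable_const 1).indicator (measurableSet_Ioi.prod measurableSet_Ioi)
  have area_int : IntegrableOn (fun t : ℝ × ℝ => t.1 * t.2) (Set.Icc 0 1) :=
    (continuous_fst.mul continuous_snd).integrableOn_Icc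
  simp only [localDisc, countIn_eq_sum_indicator fun k => (hP k).1]
  rw [integral_sub ((integrable_finsetSum _ fun k _ => indicator_int k).div_const _) area_int,
    integral_div, integral_finsetSum _ fun k _ => indicator_int k, setIntegral_unitSquare_mul]
  simp only [setIntegral_unitSquare_indicator_Ioi_prod (hP _)]

end PointSet

/-! ### Orthogonality of digit signs -/

/-- The sign `(-1)^b` of a binary digit `b`; as `i` varies, the functions `t ↦ digitSign (t i)` are
the Rademacher functions on digit vectors. -/
noncomputable def digitSign (b : Bool) : ℝ := if b then -1 else 1

lemma digitSign_not (b : Bool) : digitSign (!b) = -digitSign b := by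
  cases b <;> simp [digitSign]

lemma digitSign_bne (a b : Bool) : digitSign (a != b) = digitSign a * digitSign b := by
  cases a <;> cases b <;> simp [digitSign]

lemma digitSign_mul_self (b : Bool) : digitSign b * digitSign b = 1 := by
  cases b <;> simp [digitSign]

lemma bval_eq_one_sub_digitSign_div_two (b : Bool) : bval b = (1 - digitSign b) / 2 := by
  cases b <;> norm_num [bval, digitSign]

lemma bval_mem_Icc (b : Bool) : bval b ∈ Set.Icc (0 : ℝ) 1 := by
  cases b <;> simp [bval]

section DigitVectors

variable {ι : Type*} [Fintype ι]

lemma sum_bval_div (b : ι → Bool) (d : ι → ℝ) :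
    ∑ i, bval (b i) / d i = (∑ i, 1 / d i) / 2 - ∑ i, 1 / (2 * d i) * digitSign (b i) := by
  rw [Finset.sum_div, ← Finset.sum_sub_distrib]
  refine Finset.sum_congr rfl fun i _ => ?_
  rw [bval_eq_one_sub_digitSign_div_two]
  ring

lemma sum_bval_div_mem_Icc (b : ι → Bool) {d : ι → ℝ} (hd : ∀ i, 0 ≤ d i)
    (hsum : ∑ i, 1 / d i ≤ 1) : ∑ i, bval (b i) / d i ∈ Set.Icc (0 : ℝ) 1 :=
  ⟨Finset.sum_nonneg fun i _ => div_nonneg (bval_mem_Icc _).1 (hd i),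
    (Finset.sum_le_sum fun i _ => div_le_div_of_nonneg_right (bval_mem_Icc _).2 (hd i)).trans hsum⟩

lemma sum_eq_zero_of_flip_digit [DecidableEq ι] (i : ι) {f : (ι → Bool) → ℝ}
    (hf : ∀ t, f (Function.update t i (!t i)) = -f t) : ∑ t, f t = 0 :=
  Finset.sum_involution (fun t _ => Function.update t i (!t i)) (fun t _ => by rw [hf]; ring)
    (fun t _ _ h => by simpa using congr_fun h i) (fun _ _ => Finset.mem_univ _)
    fun t _ => by simp

lemma sum_digitSign [DecidableEq ι] (i : ι) : ∑ t : ι → Bool, digitSign (t i) = 0 :=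
  sum_eq_zero_of_flip_digit i fun t => by rw [Function.update_self, digitSign_not]

lemma sum_digitSign_mul_digitSign [DecidableEq ι] (i j : ι) :
    ∑ t : ι → Bool, digitSign (t i) * digitSign (t j) =
      if i = j then 2 ^ Fintype.card ι else 0 := by
  split_ifs with hij
  · simp [hij, digitSign_mul_self]
  · refine sum_eq_zero_of_flip_digit i fun t => ?_
    rw [Function.update_self, Function.update_of_ne (Ne.symm hij), digitSign_not, neg_mul]

lemma sum_sum_mul_digitSign [DecidableEq ι] (u : ι → ℝ) :
    ∑ t : ι → Bool, ∑ i, u i * digitSign (t i) = 0 := by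
  rw [Finset.sum_comm]
  simp [← Finset.mul_sum, sum_digitSign]

lemma sum_mul_digitSign_sum_mul_digitSign [DecidableEq ι] (u v : ι → ℝ) :
    ∑ t : ι → Bool, (∑ i, u i * digitSign (t i)) * (∑ j, v j * digitSign (t j)) =
      2 ^ Fintype.card ι * ∑ i, u i * v i := by
  calc
    _ = ∑ i, ∑ j, u i * v j * ∑ t : ι → Bool, digitSign (t i) * digitSign (t j) := by
      simp only [Finset.sum_mul_sum, mul_mul_mul_comm]
      rw [Finset.sum_comm]
      refine Finset.sum_congr rfl fun i _ => ?_
      rw [Finset.sum_comm]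
      simp only [Finset.mul_sum]
    _ = 2 ^ Fintype.card ι * ∑ i, u i * v i := by
      simp [sum_digitSign_mul_digitSign, Finset.mul_sum, mul_comm]

lemma sum_affine_digitSign_mul_affine_digitSign [DecidableEq ι] (a b : ℝ) (u v : ι → ℝ) :
    ∑ t : ι → Bool, (a + ∑ i, u i * digitSign (t i)) * (b + ∑ i, v i * digitSign (t i)) =
      2 ^ Fintype.card ι * (a * b + ∑ i, u i * v i) := by
  simp only [add_mul, mul_add, Finset.sum_add_distrib, ← Finset.mul_sum, ← Finset.sum_mul,
    sum_sum_mul_digitSign, sum_mul_digitSign_sum_mul_digitSign]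
  simp [mul_left_comm]

end DigitVectors

lemma sum_digitSign_eq_two_mul_zeroCount_sub {n : ℕ} (σ : Fin n → Bool) :
    ∑ i, digitSign (σ i) = 2 * (zeroCount σ : ℝ) - n := by
  have digitSign_eq (b : Bool) : digitSign b = 2 * (if b = false then 1 else 0) - 1 := by
    cases b <;> norm_num [digitSign]
  simp only [digitSign_eq, Finset.sum_sub_distrib, ← Finset.mul_sum]
  simp [zeroCount]

/-! ### The shifted Hammersley point set -/

lemma sum_one_div_two_pow_succ (n : ℕ) :
    ∑ i : Fin n, (1 : ℝ) / 2 ^ (i.val + 1) = 1 - 1 / 2 ^ n := by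
  induction n with
  | zero => simp
  | succ n ih =>
    simp only [Fin.sum_univ_castSucc, Fin.val_castSucc, Fin.val_last, ih]
    ring

lemma sum_one_div_two_pow_sub (n : ℕ) :
    ∑ i : Fin n, (1 : ℝ) / 2 ^ (n - i.val) = 1 - 1 / 2 ^ n := by
  rw [← sum_one_div_two_pow_succ, ← Equiv.sum_comp Fin.revPerm]
  refine Finset.sum_congr rfl fun i _ => ?_
  congr 2
  simp only [Fin.revPerm_apply, Fin.val_rev]
  omega

section Hammersley

variable {n : ℕ} (σ : Fin n → Bool)

lemma hammersleyShifted_mem_Icc (t : Fin n → Bool) :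
    hammersleyShifted n σ t ∈ Set.Icc (0 : ℝ × ℝ) 1 := by
  have weights_le : (1 : ℝ) - 1 / 2 ^ n ≤ 1 := sub_le_self _ (by positivity)
  rw [Set.Icc_prod_eq]
  exact ⟨sum_bval_div_mem_Icc t (fun _ => by positivity)
      ((sum_one_div_two_pow_sub n).trans_le weights_le),
    sum_bval_div_mem_Icc (fun i => t i != σ i) (fun _ => by positivity)
      ((sum_one_div_two_pow_succ n).trans_le weights_le)⟩

lemma one_sub_hammersleyShifted_fst (t : Fin n → Bool) :
    1 - (hammersleyShifted n σ t).1 =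
      (1 + 1 / 2 ^ n) / 2 + ∑ i : Fin n, 1 / (2 * 2 ^ (n - i.val)) * digitSign (t i) := by
  rw [hammersleyShifted, sum_bval_div, sum_one_div_two_pow_sub]
  ring

lemma one_sub_hammersleyShifted_snd (t : Fin n → Bool) :
    1 - (hammersleyShifted n σ t).2 =
      (1 + 1 / 2 ^ n) / 2 +
        ∑ i : Fin n, digitSign (σ i) / (2 * 2 ^ (i.val + 1)) * digitSign (t i) := by
  have shifted_sign (i : Fin n) : 1 / (2 * 2 ^ (i.val + 1)) * digitSign (t i != σ i) =
      digitSign (σ i) / (2 * 2 ^ (i.val + 1)) * digitSign (t i) := by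
    rw [digitSign_bne]
    ring
  rw [hammersleyShifted, sum_bval_div (fun i => t i != σ i), sum_one_div_two_pow_succ]
  simp only [shifted_sign]
  ring

lemma sum_hammersleyShifted_weights_mul :
    ∑ i : Fin n, 1 / (2 * 2 ^ (n - i.val)) * (digitSign (σ i) / (2 * 2 ^ (i.val + 1))) =
      (2 * (zeroCount σ : ℝ) - n) / 2 ^ (n + 3) := by
  rw [← sum_digitSign_eq_two_mul_zeroCount_sub, Finset.sum_div]
  refine Finset.sum_congr rfl fun i _ => ?_
  have pow_split : (2 : ℝ) ^ (n + 3) = 2 * 2 ^ (n - i.val) * (2 * 2 ^ (i.val + 1)) := by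
    rw [show n + 3 = (n - i.val) + (i.val + 1) + 2 by omega]
    ring
  rw [pow_split]
  field_simp

lemma integral_localDisc_hammersleyShifted :
    ∫ t in Set.Icc (0 : ℝ × ℝ) 1, localDisc (hammersleyShifted n σ) t =
      (2 * (zeroCount σ : ℝ) + 4 - n) / 2 ^ (n + 3) + 1 / 2 ^ (2 * (n + 1)) := by
  rw [integral_localDisc (hammersleyShifted_mem_Icc σ)]
  simp only [one_sub_hammersleyShifted_fst, one_sub_hammersleyShifted_snd,
    sum_affine_digitSign_mul_affine_digitSign, sum_hammersleyShifted_weights_mul,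
    Fintype.card_pi, Fintype.card_bool, Finset.prod_const, Finset.card_univ, Fintype.card_fin,
    Nat.cast_pow, Nat.cast_ofNat]
  field_simp
  ring

lemma abs_mean_le_LpDisc_hammersleyShifted {p : ℝ} (hp : 1 ≤ p) :
    |(2 * (zeroCount σ : ℝ) + 4 - n) / 2 ^ (n + 3) + 1 / 2 ^ (2 * (n + 1))| ≤
      LpDisc p (hammersleyShifted n σ) :=
  integral_localDisc_hammersleyShifted σ ▸ abs_integral_localDisc_le_LpDisc _ hp

end Hammersley

lemma abs_sub_natCast_le_of_abs_mean_le {n : ℕ} (hn : n ≠ 0) {a B : ℝ}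
    (h : |(a + 4 - n) / 2 ^ (n + 3) + 1 / 2 ^ (2 * (n + 1))| ≤ B / 2 ^ n) :
    |a - n| ≤ 8 * B + 5 := by
  have mean_eq : (a + 4 - n) / 2 ^ (n + 3) + 1 / 2 ^ (2 * (n + 1)) =
      (a - n + (4 + 2 / 2 ^ n)) / 8 / 2 ^ n := by
    field_simp
    ring
  have numerator_le : |a - n + (4 + 2 / 2 ^ n)| ≤ 8 * B := by
    rw [mean_eq, abs_div, abs_of_pos (show (0 : ℝ) < 2 ^ n by positivity),
      div_le_div_iff_of_pos_right (by positivity), abs_div, abs_of_pos (show (0 : ℝ) < 8 by simp),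
      div_le_iff₀' (by simp)] at h
    exact h
  have two_le_two_pow : (2 : ℝ) ≤ 2 ^ n := le_self_pow₀ one_le_two hn
  have two_div_le : (2 : ℝ) / 2 ^ n ≤ 1 := div_le_one_of_le₀ two_le_two_pow (by positivity)
  have two_div_nonneg : (0 : ℝ) ≤ 2 / 2 ^ n := by positivity
  rw [abs_le] at numerator_le ⊢
  constructor <;> linarith [numerator_le.1, numerator_le.2]

theorem statement1_general {p : ℝ} (hp : 1 ≤ p) {n : ℕ} (σ : Fin n → Bool) :
    |(2 * (zeroCount σ : ℝ) + 4 - n) / 2 ^ (n + 3) + 1 / 2 ^ (2 * (n + 1))| ≤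
        LpDisc p (hammersleyShifted n σ) ∧
      ∀ C : ℝ, LpDisc p (hammersleyShifted n σ) ≤ C * √(Real.log ((2 : ℝ) ^ n)) / 2 ^ n →
        |2 * (zeroCount σ : ℝ) - n| ≤ (8 * C * √(Real.log 2) + 5) * √n := by
  have lower := abs_mean_le_LpDisc_hammersleyShifted σ hp
  refine ⟨lower, fun C upper => ?_⟩
  obtain rfl | hn := eq_or_ne n 0
  · simp [zeroCount]
  have sqrt_log : √(Real.log ((2 : ℝ) ^ n)) = √(Real.log 2) * √n := by
    rw [Real.log_pow, mul_comm, Real.sqrt_mul (Real.log_nonneg one_le_two)]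
  have one_le_sqrt : 1 ≤ √(n : ℝ) := Real.one_le_sqrt.2 (mod_cast Nat.one_le_iff_ne_zero.2 hn)
  calc
    |2 * (zeroCount σ : ℝ) - n| ≤ 8 * (C * √(Real.log ((2 : ℝ) ^ n))) + 5 :=
      abs_sub_natCast_le_of_abs_mean_le hn (lower.trans upper)
    _ ≤ (8 * C * √(Real.log 2) + 5) * √n := by
      rw [sqrt_log]
      linarith

/-- Lower bound for the `L_p`-discrepancy of the digit shifted Hammersley point set, and
the consequence that optimal order forces the shift to be balanced. -/
theorem statement1 (p : ℝ) (hp : 1 < p) :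
    (∃ c : ℝ, 0 < c ∧ ∀ n : ℕ, 0 < n → ∀ σ : Fin n → Bool,
      c * |(2 * (zeroCount σ : ℝ) + 4 - n) / 2 ^ (n + 3) + 1 / 2 ^ (2 * (n + 1))| ≤
        LpDisc p (hammersleyShifted n σ)) ∧
    (∀ C : ℝ, 0 < C → ∃ C' : ℝ, 0 < C' ∧ ∀ n : ℕ, 0 < n → ∀ σ : Fin n → Bool,
      LpDisc p (hammersleyShifted n σ) ≤
          C * Real.sqrt (Real.log ((2 : ℝ) ^ n)) / 2 ^ n →
      |2 * (zeroCount σ : ℝ) - n| ≤ C' * Real.sqrt n) :=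
  ⟨⟨1, one_pos, fun _ _ σ => (one_mul _).trans_le (statement1_general hp.le σ).1⟩,
    fun C hC => ⟨_, by positivity, fun _ _ σ => (statement1_general hp.le σ).2 C⟩⟩
end
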